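/- Let q ≥ 2, let π = (π_1,…,π_m) be a weight vector in the simplex Δ^{m-1}, and fix probability vectors p_2,…,p_m ∈ Δ^{n-1}. Then the map p_1 ↦ T_q^π(p_1, p_2, …, p_m) is concave on Δ^{n-1}; i.e., the Jensen-Tsallis q-difference is concave in each argument separately for q ≥ 2. -/

import Mathlib

open Finset

/-- The Tsallis `q`-entropy of a finite nonnegative vector `p`:
`S_q(p) = (1/(q-1)) * (1 - ∑ i, p i ^ q)`. -/
noncomputable def tsallisEntropy {ι : Type*} [Fintype ι] (q : ℝ) (p : ι → ℝ) : ℝ :=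
  (1 / (q - 1)) * (1 - ∑ i, p i ^ q)

/-- The Jensen-Tsallis `q`-difference of `p₁,…,p_m` with weights `π`:
`T_q^π(p₁,…,p_m) = S_q(∑ⱼ πⱼ pⱼ) - ∑ⱼ πⱼ^q S_q(pⱼ)`. -/
noncomputable def jensenTsallis {n m : ℕ} (q : ℝ) (π : Fin m → ℝ)
    (p : Fin m → Fin n → ℝ) : ℝ :=
  tsallisEntropy q (∑ j, π j • p j) - ∑ j, π j ^ q * tsallisEntropy q (p j)

/-!
As a function of one argument `x`, the Jensen-Tsallis `q`-difference is, up to a constant, the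
increment `S_q(c • x + b) - S_q(c • x)` with `c, b ≥ 0`, because `S_q(c • x)` and `c ^ q * S_q(x)`
differ by a constant. This increment is `-1 / (q - 1)` times a sum of functions
`t ↦ (t + β) ^ q - t ^ q` evaluated at `t = c * x k`, which are convex for `q ≥ 2` since their
second derivative is `q * (q - 1) * ((t + β) ^ (q - 2) - t ^ (q - 2)) ≥ 0`.
-/

theorem convexOn_finset_sum {𝕜 E β ι : Type*} [Semiring 𝕜] [PartialOrder 𝕜] [AddCommMonoid E]
    [AddCommMonoid β] [PartialOrder β] [IsOrderedAddMonoid β] [SMul 𝕜 E] [Module 𝕜 β]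
    {s : Set E} {f : ι → E → β} (t : Finset ι) (hs : Convex 𝕜 s)
    (hf : ∀ i ∈ t, ConvexOn 𝕜 s (f i)) :
    ConvexOn 𝕜 s (fun x => ∑ i ∈ t, f i x) := by
  simpa only [sum_fn] using
    sum_induction f (ConvexOn 𝕜 s) (fun _ _ => ConvexOn.add) (convexOn_const 0 hs) hf

theorem sum_apply_update {ι α M : Type*} [Fintype ι] [DecidableEq ι] [AddCommMonoid M]
    (f : ι → α → M) (p : ι → α) (i : ι) (x : α) :
    ∑ j, f j (Function.update p i x j) = f i x + ∑ j ∈ {i}ᶜ, f j (p j) := by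
  rw [Fintype.sum_eq_add_sum_compl i, Function.update_self]
  congr 1
  refine sum_congr rfl fun j hj => ?_
  rw [Function.update_of_ne (by simpa using hj)]

theorem hasDerivAt_add_rpow_sub_rpow {b x : ℝ} (r : ℝ) (hx : x ≠ 0) (hxb : x + b ≠ 0) :
    HasDerivAt (fun t : ℝ => (t + b) ^ r - t ^ r)
      (r * ((x + b) ^ (r - 1) - x ^ (r - 1))) x := by
  have h_shift : HasDerivAt (fun t : ℝ => (t + b) ^ r) (r * (x + b) ^ (r - 1)) x :=
    (Real.hasDerivAt_rpow_const (Or.inl hxb)).comp_add_const x b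
  have h_pow : HasDerivAt (fun t : ℝ => t ^ r) (r * x ^ (r - 1)) x :=
    Real.hasDerivAt_rpow_const (Or.inl hx)
  simpa only [mul_sub] using h_shift.fun_sub h_pow

theorem convexOn_add_rpow_sub_rpow {q b : ℝ} (hq : 2 ≤ q) (hb : 0 ≤ b) :
    ConvexOn ℝ (Set.Ici 0) (fun t : ℝ => (t + b) ^ q - t ^ q) := by
  have hq0 : 0 ≤ q := by linarith
  have h_pos : ∀ t ∈ interior (Set.Ici (0 : ℝ)), 0 < t := fun _ ht => interior_Ici.subset ht
  have h_deriv (r t : ℝ) (ht : t ∈ interior (Set.Ici 0)) :=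
    hasDerivAt_add_rpow_sub_rpow r (h_pos t ht).ne' (add_pos_of_pos_of_nonneg (h_pos t ht) hb).ne'
  refine convexOn_of_hasDerivWithinAt2_nonneg (convex_Ici 0)
    (f' := fun t => q * ((t + b) ^ (q - 1) - t ^ (q - 1)))
    (f'' := fun t => q * ((q - 1) * ((t + b) ^ (q - 1 - 1) - t ^ (q - 1 - 1))))
    ?_ ?_ ?_ ?_
  · have h_rpow : Continuous fun t : ℝ => t ^ q := Real.continuous_rpow_const hq0
    exact ((h_rpow.comp (continuous_add_const b)).sub h_rpow).continuousOn
  · exact fun t ht => (h_deriv q t ht).hasDerivWithinAt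
  · exact fun t ht => ((h_deriv (q - 1) t ht).const_mul q).hasDerivWithinAt
  · intro t ht
    have h_mono : t ^ (q - 1 - 1) ≤ (t + b) ^ (q - 1 - 1) :=
      Real.rpow_le_rpow (h_pos t ht).le (by linarith) (by linarith)
    exact mul_nonneg hq0 (mul_nonneg (by linarith) (sub_nonneg.2 h_mono))

section TsallisEntropy

variable {ι : Type*} [Fintype ι]

theorem tsallisEntropy_smul (q : ℝ) {c : ℝ} (hc : 0 ≤ c) {x : ι → ℝ} (hx : 0 ≤ x) :
    tsallisEntropy q (c • x) = c ^ q * tsallisEntropy q x + 1 / (q - 1) * (1 - c ^ q) := by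
  have h_sum : ∑ k, (c • x) k ^ q = c ^ q * ∑ k, x k ^ q := by
    simp only [Pi.smul_apply, smul_eq_mul, Real.mul_rpow hc (hx _), mul_sum]
  rw [tsallisEntropy, tsallisEntropy, h_sum]
  ring

theorem concaveOn_tsallisEntropy_add_sub {q : ℝ} (hq : 2 ≤ q) {b : ι → ℝ} (hb : 0 ≤ b) :
    ConcaveOn ℝ (Set.Ici 0) (fun x => tsallisEntropy q (x + b) - tsallisEntropy q x) := by
  have h_coord (k : ι) :
      ConvexOn ℝ (Set.Ici 0) (fun x : ι → ℝ => (x k + b k) ^ q - x k ^ q) :=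
    ((convexOn_add_rpow_sub_rpow hq (hb k)).comp_linearMap
      (LinearMap.proj (φ := fun _ : ι => ℝ) k)).subset (fun _ hx => hx k) (convex_Ici 0)
  have h_sum : ConvexOn ℝ (Set.Ici 0)
      (fun x : ι → ℝ => ∑ k, ((x k + b k) ^ q - x k ^ q)) :=
    convexOn_finset_sum univ (convex_Ici 0) fun k _ => h_coord k
  have h_coeff : 0 ≤ 1 / (q - 1) := one_div_nonneg.2 (by linarith)
  refine (h_sum.smul h_coeff).neg.congr fun x _ => ?_
  simp only [tsallisEntropy, Pi.neg_apply, Pi.add_apply, sum_sub_distrib, smul_eq_mul]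
  ring

end TsallisEntropy

theorem jensenTsallis_update {n m : ℕ} (q : ℝ) {π : Fin m → ℝ} (p : Fin m → Fin n → ℝ)
    {i : Fin m} (hπ : 0 ≤ π i) {x : Fin n → ℝ} (hx : 0 ≤ x) :
    jensenTsallis q π (Function.update p i x) =
      tsallisEntropy q (π i • x + ∑ j ∈ {i}ᶜ, π j • p j) - tsallisEntropy q (π i • x) +
        (1 / (q - 1) * (1 - π i ^ q) - ∑ j ∈ {i}ᶜ, π j ^ q * tsallisEntropy q (p j)) := by
  have h_mix : ∑ j, π j • Function.update p i x j = π i • x + ∑ j ∈ {i}ᶜ, π j • p j :=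
    sum_apply_update (fun j v => π j • v) p i x
  have h_entropy : ∑ j, π j ^ q * tsallisEntropy q (Function.update p i x j) =
      π i ^ q * tsallisEntropy q x + ∑ j ∈ {i}ᶜ, π j ^ q * tsallisEntropy q (p j) :=
    sum_apply_update (fun j v => π j ^ q * tsallisEntropy q v) p i x
  rw [jensenTsallis, h_mix, h_entropy, tsallisEntropy_smul q hπ hx]
  ring

theorem jensenTsallis_concaveOn_first_arg_general {n m : ℕ} {q : ℝ} (hq : 2 ≤ q)
    {π : Fin m → ℝ} (hπ : 0 ≤ π) {p : Fin m → Fin n → ℝ} {i : Fin m}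
    (hp : ∀ j ≠ i, 0 ≤ p j) :
    ConcaveOn ℝ (Set.Ici 0) (fun x => jensenTsallis q π (Function.update p i x)) := by
  have hb : 0 ≤ ∑ j ∈ {i}ᶜ, π j • p j :=
    sum_nonneg fun j hj => smul_nonneg (hπ j) (hp j (by simpa using hj))
  have h_increment := (concaveOn_tsallisEntropy_add_sub hq hb).comp_linearMap
    (π i • LinearMap.id : (Fin n → ℝ) →ₗ[ℝ] Fin n → ℝ)
  have h_orthant := h_increment.subset (s := Set.Ici 0)
    (fun _ hx => smul_nonneg (hπ i) hx) (convex_Ici 0)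
  exact (h_orthant.add_const _).congr fun x hx => (jensenTsallis_update q p (hπ i) hx).symm

/-- For `q ≥ 2`, the Jensen-Tsallis `q`-difference is concave in each argument
separately: with the remaining arguments `p₂,…,p_m` fixed in the simplex, the map
`p₁ ↦ T_q^π(p₁,p₂,…,p_m)` is concave on the simplex. -/
theorem jensenTsallis_concaveOn_first_arg (n m : ℕ) (q : ℝ) (hq : 2 ≤ q)
    (π : Fin (m + 1) → ℝ) (hπ0 : ∀ j, 0 ≤ π j) (hπ1 : ∑ j, π j = 1)
    (ps : Fin m → Fin n → ℝ) (hps0 : ∀ j k, 0 ≤ ps j k) (hps1 : ∀ j, ∑ k, ps j k = 1) :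
    ConcaveOn ℝ {p : Fin n → ℝ | (∀ k, 0 ≤ p k) ∧ ∑ k, p k = 1}
      (fun p₁ => jensenTsallis q π (Fin.cons p₁ ps)) := by
  refine ConcaveOn.subset (t := Set.Ici 0) ?_ (fun _ hx => hx.1) (convex_stdSimplex ℝ (Fin n))
  simpa only [Fin.update_cons_zero] using jensenTsallis_concaveOn_first_arg_general
    (p := Fin.cons 0 ps) (i := 0) hq hπ0 (Fin.cases (absurd rfl) fun j _ => hps0 j)
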